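/- arXiv:math/0305190 — 5 statements merged into one kernel-verified Lean document; each statement's English description precedes it below -/
import Mathlib

section
/- Let n > q ≥ 1 be coprime integers and let q' be the unique integer with 1 ≤ q' < n and q·q' ≡ 1 (mod n). Then n/q is a T-fraction if and only if γ(n/q') + γ(n/q) = ι(n/q). -/
/-- `g = gcd(n, q+1)`. -/
def Tg (n q : ℕ) : ℕ := Nat.gcd n (q + 1)

/-- `ι(n/q) = n / gcd(n, q+1)`. -/
def Tiota (n q : ℕ) : ℕ := n / Tg n q

/-- `γ(n/q) = (q+1) / gcd(n, q+1)`. -/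
def Tgamma (n q : ℕ) : ℕ := (q + 1) / Tg n q

/-- `n/q` (with `n > q ≥ 1` coprime) is a T-fraction if `n ∣ (q+1)²` and `q ≠ n-1`. -/
def IsTFraction (n q : ℕ) : Prop :=
  1 ≤ q ∧ q < n ∧ Nat.Coprime n q ∧ n ∣ (q + 1) ^ 2 ∧ q ≠ n - 1

/-!
Since `q` is a unit modulo `n` with inverse `q'`, multiplying by `q` turns `q' + 1` into `q + 1` and
`(q' + 1) + (q + 1)` into `(q + 1) ^ 2`. Hence `gcd(n, q' + 1) = gcd(n, q + 1)`, so clearing this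
common denominator reads `γ(n/q') + γ(n/q) = ι(n/q)` as `(q' + 1) + (q + 1) = n`, while
`n ∣ (q + 1) ^ 2` means `n ∣ (q' + 1) + (q + 1)`. This sum is at most `2 * n`, with equality only in
the excluded case `q = q' = n - 1`.
-/

section ModularInverse

variable {n q q' : ℕ}

theorem mul_add_one_modEq_of_mul_modEq_one (h : q * q' ≡ 1 [MOD n]) :
    q * (q' + 1) ≡ q + 1 [MOD n] :=
  calc q * (q' + 1) = q * q' + q := mul_add_one q q'
    _ ≡ 1 + q [MOD n] := h.add_right q
    _ = q + 1 := add_comm 1 q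

theorem Tg_eq_of_mul_modEq_one (h : q * q' ≡ 1 [MOD n]) : Tg n q' = Tg n q :=
  have hcop : q.Coprime n := Nat.coprime_of_mul_modEq_one q' h
  calc n.gcd (q' + 1) = n.gcd (q * (q' + 1)) := (hcop.gcd_mul_left_cancel_right _).symm
    _ = n.gcd (q + 1) := by
      simpa only [Nat.gcd_comm] using (mul_add_one_modEq_of_mul_modEq_one h).gcd_eq

theorem dvd_add_one_sq_iff_of_mul_modEq_one (h : q * q' ≡ 1 [MOD n]) :
    n ∣ (q + 1) ^ 2 ↔ n ∣ (q' + 1) + (q + 1) := by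
  have hcop : n.Coprime q := (Nat.coprime_of_mul_modEq_one q' h).symm
  have hmul : q * ((q' + 1) + (q + 1)) ≡ (q + 1) ^ 2 [MOD n] :=
    calc q * ((q' + 1) + (q + 1)) = q * (q' + 1) + q * (q + 1) := mul_add ..
      _ ≡ (q + 1) + q * (q + 1) [MOD n] := (mul_add_one_modEq_of_mul_modEq_one h).add_right _
      _ = (q + 1) ^ 2 := by ring
  rw [← hmul.dvd_iff dvd_rfl, hcop.dvd_mul_left]

end ModularInverse

theorem Tgamma_add_Tgamma_eq_Tiota_iff {n q q' : ℕ} (hg : Tg n q' = Tg n q) :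
    Tgamma n q' + Tgamma n q = Tiota n q ↔ (q' + 1) + (q + 1) = n := by
  have hdvd_n : Tg n q ∣ n := Nat.gcd_dvd_left n (q + 1)
  have hdvd : Tg n q ∣ q + 1 := Nat.gcd_dvd_right n (q + 1)
  have hdvd' : Tg n q ∣ q' + 1 := hg ▸ Nat.gcd_dvd_right n (q' + 1)
  rw [Tgamma, Tgamma, Tiota, hg, ← Nat.add_div_of_dvd_right hdvd',
    Nat.div_left_inj (hdvd'.add hdvd) hdvd_n]

/-- Let `n > q ≥ 1` be coprime and let `q'` be the unique integer with `1 ≤ q' < n` and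
`q·q' ≡ 1 (mod n)`. Then `n/q` is a T-fraction iff `γ(n/q') + γ(n/q) = ι(n/q)`. -/
theorem tfraction_iff_gamma_add_gamma_eq_iota (n q q' : ℕ)
    (hq : 1 ≤ q) (hqn : q < n) (hcop : Nat.Coprime n q)
    (hq' : 1 ≤ q') (hq'n : q' < n) (hinv : q * q' ≡ 1 [MOD n]) :
    IsTFraction n q ↔ Tgamma n q' + Tgamma n q = Tiota n q := by
  rw [Tgamma_add_Tgamma_eq_Tiota_iff (Tg_eq_of_mul_modEq_one hinv), IsTFraction,
    dvd_add_one_sq_iff_of_mul_modEq_one hinv]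
  constructor
  · rintro ⟨-, -, -, hdvd, hne⟩
    have hlt : (q' + 1) + (q + 1) < 2 * n := by omega
    exact Nat.eq_of_dvd_of_lt_two_mul (by omega) hdvd hlt
  · intro hsum
    have hne : q ≠ n - 1 := by omega
    exact ⟨hq, hqn, hcop, hsum.symm.dvd, hne⟩
end

section
/- Let n > q ≥ 1 be coprime integers with ι(n/q) = 2. Then γ(n/q) = 1, n is divisible by 4, q = n/2 − 1, and n/q is a T-fraction. -/
/-!
Write `n = g ι` and `q + 1 = g γ` with `ι` and `γ` coprime; then `γ ≤ ι` because `q < n`. For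
`ι = 2` this forces `γ = 1`, so `g = q + 1` and `n = 2 (q + 1)`. Since `n` is even and coprime to
`q`, the number `g = q + 1` is even. By coprimality of `ι` and `γ`, the condition `n ∣ (q + 1)²`
amounts to `ι ∣ g`, which therefore holds.
-/

theorem tg_pos (n q : ℕ) : 0 < Tg n q :=
  Nat.gcd_pos_of_pos_right n q.succ_pos

theorem tg_mul_tiota (n q : ℕ) : Tg n q * Tiota n q = n :=
  Nat.mul_div_cancel' (Nat.gcd_dvd_left n (q + 1))

theorem tg_mul_tgamma (n q : ℕ) : Tg n q * Tgamma n q = q + 1 :=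
  Nat.mul_div_cancel' (Nat.gcd_dvd_right n (q + 1))

theorem coprime_tiota_tgamma (n q : ℕ) : Nat.Coprime (Tiota n q) (Tgamma n q) :=
  Nat.coprime_div_gcd_div_gcd (tg_pos n q)

theorem tgamma_le_tiota {n q : ℕ} (hqn : q < n) : Tgamma n q ≤ Tiota n q :=
  Nat.div_le_div_right hqn

theorem dvd_succ_sq_iff_tiota_dvd_tg (n q : ℕ) : n ∣ (q + 1) ^ 2 ↔ Tiota n q ∣ Tg n q := by
  have hsq : (q + 1) ^ 2 = Tg n q * (Tg n q * Tgamma n q ^ 2) := by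
    rw [← tg_mul_tgamma n q]
    ring
  calc
    n ∣ (q + 1) ^ 2 ↔ Tg n q * Tiota n q ∣ Tg n q * (Tg n q * Tgamma n q ^ 2) := by
      rw [tg_mul_tiota, hsq]
    _ ↔ Tiota n q ∣ Tg n q * Tgamma n q ^ 2 := Nat.mul_dvd_mul_iff_left (tg_pos n q)
    _ ↔ Tiota n q ∣ Tg n q := ((coprime_tiota_tgamma n q).pow_right 2).dvd_mul_right

theorem tgamma_eq_one_of_tiota_eq_two {n q : ℕ} (hqn : q < n) (hiota : Tiota n q = 2) :
    Tgamma n q = 1 := by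
  have hle : Tgamma n q ≤ 2 := hiota ▸ tgamma_le_tiota hqn
  have hodd : Odd (Tgamma n q) := Nat.coprime_two_left.mp (hiota ▸ coprime_tiota_tgamma n q)
  obtain ⟨k, hk⟩ := hodd
  omega

/-- If `n > q ≥ 1` are coprime with `ι(n/q) = 2`, then `γ(n/q) = 1`, `4 ∣ n`,
`q = n/2 − 1`, and `n/q` is a T-fraction. -/
theorem iota_eq_two (n q : ℕ) (hq : 1 ≤ q) (hqn : q < n) (hcop : Nat.Coprime n q)
    (hiota : Tiota n q = 2) :
    Tgamma n q = 1 ∧ 4 ∣ n ∧ q = n / 2 - 1 ∧ IsTFraction n q := by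
  have hgamma : Tgamma n q = 1 := tgamma_eq_one_of_tiota_eq_two hqn hiota
  have hg : Tg n q = q + 1 := by simpa [hgamma] using tg_mul_tgamma n q
  have hn : n = (q + 1) * 2 := by rw [← hg, ← hiota, tg_mul_tiota]
  have hq_odd : Odd q := Nat.coprime_two_left.mp (hcop.coprime_dvd_left (Dvd.intro_left _ hn.symm))
  have hq_succ : 2 ∣ q + 1 := hq_odd.add_one.two_dvd
  have hdvd : n ∣ (q + 1) ^ 2 :=
    (dvd_succ_sq_iff_tiota_dvd_tg n q).mpr (by rwa [hiota, hg])
  exact ⟨hgamma, by omega, by omega, hq, hqn, hcop, hdvd, by omega⟩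
end

section
/- Let n > q ≥ 1 be coprime integers. Then ι(n/q) = 2 if and only if the Hirzebruch–Jung expansion of n/q is either [4] or [3,2,…,2,3]. In that case β(n/q) is a positive integer equal to ρ(n/q); explicitly n = 4β, q = 2β − 1, and the expansion is [4] when β = 1 and [3,2,…,2,3] with β − 2 intermediate 2's when β ≥ 2. -/
/-- Hirzebruch–Jung continued fraction: `hj [b] = b`, `hj (b :: l) = b - 1 / hj l`.
(With the conventions `hj [] = 0` and `1/0 = 0`, this agrees with the recursion
`[b_ρ] = b_ρ`, `[b_1,…,b_ρ] = b_1 − 1/[b_2,…,b_ρ]`.) -/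
def hj : List ℚ → ℚ
  | [] => 0
  | b :: l => b - 1 / hj l

/-- `β(n/q) = gcd(n, q+1)² / n ∈ ℚ`. -/
def Tbeta (n q : ℕ) : ℚ := (Tg n q : ℚ) ^ 2 / (n : ℚ)

/-!
If `ι(n/q) = 2`, then `g = gcd(n, q + 1)` satisfies `n = 2g` and `g ∣ q + 1`. Moreover `q + 1 < n`,
since `q + 1 = n` would give `g = n`; so `g = q + 1` and `n = 2(q + 1)`. Coprimality makes `q` odd,
hence `n/q = 4(k + 1)/(2k + 1)` for some `k`. The lists `[4]` and `[3, 2, …, 2, 3]` evaluate to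
exactly these fractions, and an expansion with all entries at least `2` is determined by its value
`x`, since its first entry is `⌈x⌉`.
-/

theorem one_lt_hj {l : List ℚ} (hl : ∀ b ∈ l, 2 ≤ b) (hne : l ≠ []) : 1 < hj l := by
  induction l with
  | nil => exact absurd rfl hne
  | cons b l ih =>
    obtain ⟨hb, hl⟩ := List.forall_mem_cons.1 hl
    rcases eq_or_ne l [] with rfl | hl'
    · simp only [hj, div_zero, sub_zero]
      linarith
    · have hinv : 1 / hj l < 1 := by simpa using inv_lt_one_of_one_lt₀ (ih hl hl')
      simp only [hj]
      linarith

theorem one_div_hj_mem_Ico {l : List ℚ} (hl : ∀ b ∈ l, 2 ≤ b) : 1 / hj l ∈ Set.Ico 0 1 := by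
  rcases eq_or_ne l [] with rfl | hne
  · simp [hj]
  · have h := one_lt_hj hl hne
    exact ⟨by positivity, by simpa using inv_lt_one_of_one_lt₀ h⟩

theorem ceil_hj_cons (b : ℤ) {l : List ℚ} (hl : ∀ c ∈ l, 2 ≤ c) : ⌈hj (b :: l)⌉ = b := by
  obtain ⟨hnonneg, hlt⟩ := one_div_hj_mem_Ico hl
  rw [Int.ceil_eq_iff, hj]
  constructor <;> linarith

theorem two_le_of_mem_map_intCast {L : List ℤ} (hL : ∀ b ∈ L, 2 ≤ b) :
    ∀ b ∈ L.map ((↑) : ℤ → ℚ), 2 ≤ b :=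
  List.forall_mem_map.2 fun b hb => mod_cast hL b hb

theorem hj_map_intCast_injOn :
    Set.InjOn (fun L : List ℤ => hj (L.map (↑))) {L | ∀ b ∈ L, 2 ≤ b} := by
  have hj_ne_zero {b : ℤ} {L : List ℤ} (hL : ∀ c ∈ b :: L, 2 ≤ c) :
      hj ((b :: L).map (↑)) ≠ 0 :=
    (zero_lt_one.trans (one_lt_hj (two_le_of_mem_map_intCast hL) (by simp))).ne'
  intro L hL M hM h
  induction L generalizing M with
  | nil =>
    cases M with
    | nil => rfl
    | cons c M => exact absurd h.symm (hj_ne_zero hM)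
  | cons b L ih =>
    cases M with
    | nil => exact absurd h (hj_ne_zero hL)
    | cons c M =>
      have hL' := (List.forall_mem_cons.1 hL).2
      have hM' := (List.forall_mem_cons.1 hM).2
      have heads : b = c := by
        rw [← ceil_hj_cons b (two_le_of_mem_map_intCast hL'),
          ← ceil_hj_cons c (two_le_of_mem_map_intCast hM')]
        exact congrArg Int.ceil h
      have tails : hj (L.map (↑)) = hj (M.map (↑)) := by
        simpa [hj, heads] using h
      rw [heads, ih hL' hM' tails]

theorem hj_replicate_two_append (k : ℕ) {l : List ℚ} (hl : 1 ≤ hj l) :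
    hj (List.replicate k 2 ++ l) = (1 + (k + 1) * (hj l - 1)) / (1 + k * (hj l - 1)) := by
  have hexcess : 0 ≤ hj l - 1 := sub_nonneg.2 hl
  induction k with
  | zero => simp
  | succ k ih =>
    rw [List.replicate_succ, List.cons_append, hj, ih, one_div_div, Nat.cast_succ]
    field_simp
    ring

/-- The Hirzebruch–Jung expansions of the fractions with `ι = 2`, namely `[4]` and
`[3, 2, …, 2, 3]`, indexed so that the `k`-th one has length `k + 1`. -/
def iotaTwoExpansion : ℕ → List ℤ
  | 0 => [4]
  | k + 1 => 3 :: (List.replicate k 2 ++ [3])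

theorem length_iotaTwoExpansion (k : ℕ) : (iotaTwoExpansion k).length = k + 1 := by
  cases k <;> simp [iotaTwoExpansion]

theorem two_le_of_mem_iotaTwoExpansion {k : ℕ} : ∀ b ∈ iotaTwoExpansion k, 2 ≤ b := by
  cases k <;> simp [iotaTwoExpansion, or_imp, forall_and]

theorem hj_iotaTwoExpansion (k : ℕ) :
    hj ((iotaTwoExpansion k).map (↑)) = (4 * (k + 1) : ℕ) / (2 * k + 1 : ℕ) := by
  cases k with
  | zero => simp [iotaTwoExpansion, hj]
  | succ k =>
    have hthree : hj [3] = 3 := by simp [hj]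
    simp only [iotaTwoExpansion, List.map_cons, List.map_append, List.map_replicate,
      List.map_nil, Int.cast_ofNat, hj]
    rw [hj_replicate_two_append k (by norm_num [hthree]), hthree]
    push_cast
    field_simp
    ring

theorem coprime_four_mul_succ_two_mul_add_one (k : ℕ) :
    Nat.Coprime (4 * (k + 1)) (2 * k + 1) := by
  have htwo : Nat.Coprime 2 (2 * k + 1) := by simp
  have hsucc : Nat.Coprime (2 * k + 1 + 1) (2 * k + 1) := by simp
  convert htwo.mul_left hsucc using 1
  ring

theorem natCast_div_natCast_inj {a b c d : ℕ} (hb : 0 < b) (hd : 0 < d)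
    (hab : a.Coprime b) (hcd : c.Coprime d) :
    (a : ℚ) / b = c / d ↔ a = c ∧ b = d := by
  refine ⟨fun h => ?_, by rintro ⟨rfl, rfl⟩; rfl⟩
  have hint : ((a : ℤ) : ℚ) / (b : ℤ) = (c : ℤ) / (d : ℤ) := by simpa using h
  exact_mod_cast Rat.div_int_inj (a := a) (b := b) (c := c) (d := d)
    (mod_cast hb) (mod_cast hd) hab hcd hint

theorem eq_iotaTwoExpansion_iff {n q : ℕ} (hq : 0 < q) (hcop : n.Coprime q) {L : List ℤ}
    (hL : ∀ b ∈ L, 2 ≤ b) (hval : hj (L.map (↑)) = n / q) (k : ℕ) :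
    L = iotaTwoExpansion k ↔ n = 4 * (k + 1) ∧ q = 2 * k + 1 := by
  rw [← hj_map_intCast_injOn.eq_iff hL two_le_of_mem_iotaTwoExpansion, hval,
    hj_iotaTwoExpansion, natCast_div_natCast_inj hq (by positivity) hcop
      (coprime_four_mul_succ_two_mul_add_one k)]

theorem Tg_mul_succ (m q : ℕ) : Tg (m * (q + 1)) q = q + 1 :=
  Nat.gcd_mul_left_left m (q + 1)

theorem Tiota_mul_succ (m q : ℕ) : Tiota (m * (q + 1)) q = m := by
  rw [Tiota, Tg_mul_succ, Nat.mul_div_cancel _ q.succ_pos]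

theorem Tbeta_mul_succ (m q : ℕ) : Tbeta (m * (q + 1)) q = (q + 1) / m := by
  rw [Tbeta, Tg_mul_succ]
  push_cast
  field_simp

theorem Tiota_eq_two_iff {n q : ℕ} (hqn : q < n) : Tiota n q = 2 ↔ n = 2 * (q + 1) := by
  refine ⟨fun h => ?_, fun h => h ▸ Tiota_mul_succ 2 q⟩
  have hn : n = 2 * Tg n q := Nat.eq_mul_of_div_eq_left (Nat.gcd_dvd_left n (q + 1)) h
  have hne : q + 1 ≠ n := by
    rintro rfl
    rw [Tg, Nat.gcd_self] at hn
    omega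
  have hg : q + 1 = Tg n q :=
    Nat.eq_of_dvd_of_lt_two_mul q.succ_ne_zero (Nat.gcd_dvd_right n (q + 1)) (by omega)
  rwa [hg]

theorem Tiota_eq_two_iff_exists {n q : ℕ} (hqn : q < n) (hcop : n.Coprime q) :
    Tiota n q = 2 ↔ ∃ k, n = 4 * (k + 1) ∧ q = 2 * k + 1 := by
  rw [Tiota_eq_two_iff hqn]
  constructor
  · intro hn
    have hodd : Odd q := Nat.coprime_two_left.1 (hcop.coprime_dvd_left ⟨q + 1, hn⟩)
    obtain ⟨k, rfl⟩ := hodd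
    exact ⟨k, by omega, rfl⟩
  · rintro ⟨k, rfl, rfl⟩
    ring

/-- Let `n > q ≥ 1` be coprime with Hirzebruch–Jung expansion `n/q = [b_1,…,b_ρ]`
(all `b_i ≥ 2`). Then `ι(n/q) = 2` iff the expansion is `[4]` or `[3,2,…,2,3]`.
In that case `β(n/q)` is a positive integer equal to `ρ(n/q)`; explicitly `n = 4β`,
`q = 2β − 1`, and the expansion is `[4]` when `β = 1` and `[3,2,…,2,3]` with `β − 2`
intermediate `2`'s when `β ≥ 2`. -/
theorem iota_eq_two_iff_expansion (n q : ℕ) (hq : 1 ≤ q) (hqn : q < n)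
    (hcop : Nat.Coprime n q) (L : List ℤ) (hL2 : ∀ b ∈ L, 2 ≤ b)
    (hval : hj (L.map (fun b => (b : ℚ))) = (n : ℚ) / (q : ℚ)) :
    (Tiota n q = 2 ↔ L = [4] ∨ ∃ k : ℕ, L = 3 :: (List.replicate k 2 ++ [3])) ∧
    (Tiota n q = 2 → ∃ β : ℕ, 0 < β ∧ (β : ℚ) = Tbeta n q ∧ β = L.length ∧
      n = 4 * β ∧ q = 2 * β - 1 ∧
      (β = 1 → L = [4]) ∧
      (2 ≤ β → L = 3 :: (List.replicate (β - 2) 2 ++ [3]))) := by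
  -- In `hval` the cast to `ℚ` is elaborated as a monadic lift of the whole list `L`.
  have hval' : hj (L.map (↑)) = n / q := by
    simpa only [bind_pure_comp, List.map_eq_map, List.map_id'] using hval
  have expansion_iff := eq_iotaTwoExpansion_iff hq hcop hL2 hval'
  have iota_iff := Tiota_eq_two_iff_exists hqn hcop
  constructor
  · simp only [iota_iff, ← expansion_iff]
    exact Nat.or_exists_add_one.symm
  · intro hiota
    obtain ⟨k, hn, hq'⟩ := iota_iff.1 hiota
    obtain rfl := (expansion_iff k).2 ⟨hn, hq'⟩
    refine ⟨k + 1, k.succ_pos, ?_, (length_iotaTwoExpansion k).symm, hn, by omega, ?_, ?_⟩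
    · rw [(Tiota_eq_two_iff hqn).1 hiota, Tbeta_mul_succ, hq']
      push_cast
      ring
    · intro hk
      rw [Nat.succ.inj hk, iotaTwoExpansion]
    · intro hk
      obtain ⟨j, rfl⟩ := Nat.exists_eq_add_of_le' (Nat.le_of_succ_le_succ hk)
      rfl
end

section
/- If the sequence [b_1,…,b_ρ] is a T-chain, then so are the sequences [2, b_1,…,b_{ρ−1}, b_ρ + 1] and [b_1 + 1, b_2,…,b_ρ, 2]. -/
/-- A sequence of integers `≥ 2` is a T-chain if its Hirzebruch–Jung value
equals `n/q` for some T-fraction `n/q`. -/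
def IsTChain (L : List ℤ) : Prop :=
  (∀ b ∈ L, 2 ≤ b) ∧
  ∃ n q : ℕ, IsTFraction n q ∧ hj (L.map (fun b => (b : ℚ))) = (n : ℚ) / (q : ℚ)

/-!
The value of a nonempty chain of integers `≥ 2` is `n / q`, where `n` and `q` form the first
column of the product of the matrices `!![b, -1; 1, 0]` over its entries `b`. The first row of
this product consists of `n` and `-q'`, where `q * q' ≡ 1 [MOD n]`. Since
`q * (q + q' + 2) ≡ (q + 1) ^ 2 [MOD n]`, the fraction `n / q` is a T-fraction iff
`q + q' + 2 = n`, which says that the matrix product over `[b_1, …, b_ρ, 1]` has trace `2`. This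
trace depends only on the cyclic sequence, and it is unchanged by the blow-up that replaces
adjacent entries `x, y` by `x + 1, 1, y + 1`. Both extensions of a T-chain blow up the cyclic
sequence `[b_1, …, b_ρ, 1]` at one side of its final `1`, which becomes the new entry `2`.
-/

section CommRing

variable {R : Type*} [CommRing R]

/-- The continuant matrix of a Hirzebruch–Jung continued fraction: the product of the matrices
`!![b, -1; 1, 0]`, which act on `x` as the Möbius transformations `x ↦ b - 1 / x`. -/
def hjMatrix (L : List R) : Matrix (Fin 2) (Fin 2) R :=
  (L.map fun b => !![b, -1; 1, 0]).prod

@[simp]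
theorem hjMatrix_nil : hjMatrix ([] : List R) = 1 := rfl

theorem hjMatrix_cons (b : R) (L : List R) :
    hjMatrix (b :: L) = !![b, -1; 1, 0] * hjMatrix L := by
  simp only [hjMatrix, List.map_cons, List.prod_cons]

theorem hjMatrix_append (L M : List R) : hjMatrix (L ++ M) = hjMatrix L * hjMatrix M := by
  simp only [hjMatrix, List.map_append, List.prod_append]

theorem hjMatrix_singleton (b : R) : hjMatrix [b] = !![b, -1; 1, 0] := by
  rw [hjMatrix_cons, hjMatrix_nil, mul_one]

theorem hjMatrix_cons_zero_zero (b : R) (L : List R) :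
    hjMatrix (b :: L) 0 0 = b * hjMatrix L 0 0 - hjMatrix L 1 0 := by
  simp [hjMatrix_cons, Matrix.mul_apply, Fin.sum_univ_two, sub_eq_add_neg]

theorem hjMatrix_cons_one_zero (b : R) (L : List R) :
    hjMatrix (b :: L) 1 0 = hjMatrix L 0 0 := by
  simp [hjMatrix_cons, Matrix.mul_apply, Fin.sum_univ_two]

theorem hjMatrix_append_singleton_zero_zero (L : List R) (b : R) :
    hjMatrix (L ++ [b]) 0 0 = hjMatrix L 0 0 * b + hjMatrix L 0 1 := by
  simp [hjMatrix_append, hjMatrix_singleton, Matrix.mul_apply, Fin.sum_univ_two]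

theorem hjMatrix_append_singleton_zero_one (L : List R) (b : R) :
    hjMatrix (L ++ [b]) 0 1 = -hjMatrix L 0 0 := by
  simp [hjMatrix_append, hjMatrix_singleton, Matrix.mul_apply, Fin.sum_univ_two]

theorem hjMatrix_map {S : Type*} [CommRing S] (f : R →+* S) (L : List R) :
    hjMatrix (L.map f) = (hjMatrix L).map f := by
  induction L with
  | nil => simp
  | cons b L ih =>
    rw [List.map_cons, hjMatrix_cons, hjMatrix_cons, ih, Matrix.map_mul]
    congr 1
    ext i j
    fin_cases i <;> fin_cases j <;> simp

theorem det_hjMatrix (L : List R) : (hjMatrix L).det = 1 := by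
  induction L with
  | nil => simp
  | cons b L ih => rw [hjMatrix_cons, Matrix.det_mul, ih, Matrix.det_fin_two_of]; ring

theorem trace_hjMatrix_append_comm (L M : List R) :
    (hjMatrix (L ++ M)).trace = (hjMatrix (M ++ L)).trace := by
  rw [hjMatrix_append, hjMatrix_append, Matrix.trace_mul_comm]

theorem hjMatrix_blowup (x y : R) (L : List R) :
    hjMatrix ((x + 1) :: 1 :: (y + 1) :: L) = hjMatrix (x :: y :: L) := by
  simp only [hjMatrix_cons, ← mul_assoc, Matrix.mul_fin_two]
  ring_nf

theorem trace_hjMatrix_two_cons (L : List R) (x : R) :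
    (hjMatrix (2 :: (L ++ [x + 1]) ++ [1])).trace = (hjMatrix (L ++ [x] ++ [1])).trace :=
  calc (hjMatrix (2 :: (L ++ [x + 1]) ++ [1])).trace
      = (hjMatrix (L ++ (x + 1) :: 1 :: [1 + 1])).trace := by
        simpa [one_add_one_eq_two] using trace_hjMatrix_append_comm [2] (L ++ [x + 1, 1])
    _ = (hjMatrix (L ++ [x] ++ [1])).trace := by
        simp [hjMatrix_append L, hjMatrix_blowup]

theorem trace_hjMatrix_append_two (x : R) (L : List R) :
    (hjMatrix ((x + 1) :: (L ++ [2]) ++ [1])).trace = (hjMatrix (x :: L ++ [1])).trace :=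
  calc (hjMatrix ((x + 1) :: (L ++ [2]) ++ [1])).trace
      = (hjMatrix ((1 + 1) :: 1 :: (x + 1) :: L)).trace := by
        simpa [one_add_one_eq_two] using trace_hjMatrix_append_comm ((x + 1) :: L) [2, 1]
    _ = (hjMatrix (1 :: x :: L)).trace := by rw [hjMatrix_blowup]
    _ = (hjMatrix (x :: L ++ [1])).trace := trace_hjMatrix_append_comm [1] (x :: L)

section Order

variable [LinearOrder R] [IsStrictOrderedRing R]

theorem hjMatrix_col_bounds {L : List R} (hL : ∀ b ∈ L, 2 ≤ b) :
    0 ≤ hjMatrix L 1 0 ∧ hjMatrix L 1 0 < hjMatrix L 0 0 := by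
  induction L with
  | nil => simp
  | cons b L ih =>
    obtain ⟨hb, hL⟩ := List.forall_mem_cons.mp hL
    obtain ⟨hq, hqn⟩ := ih hL
    rw [hjMatrix_cons_zero_zero, hjMatrix_cons_one_zero]
    constructor <;> nlinarith

theorem hjMatrix_row_bounds {L : List R} (hL : ∀ b ∈ L, 2 ≤ b) :
    hjMatrix L 0 1 ≤ 0 ∧ -hjMatrix L 0 1 < hjMatrix L 0 0 := by
  induction L using List.reverseRecOn with
  | nil => simp
  | append_singleton L b ih =>
    obtain ⟨hL, hb⟩ := List.forall_mem_append.mp hL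
    obtain ⟨hq, hqn⟩ := ih hL
    have hb : 2 ≤ b := hb b (List.mem_singleton_self b)
    rw [hjMatrix_append_singleton_zero_zero, hjMatrix_append_singleton_zero_one]
    constructor <;> nlinarith

end Order

end CommRing

theorem hj_eq_hjMatrix_div {L : List ℚ} (hL : ∀ b ∈ L, 2 ≤ b) :
    hj L = hjMatrix L 0 0 / hjMatrix L 1 0 := by
  induction L with
  | nil => simp [hj]
  | cons b L ih =>
    have hL := (List.forall_mem_cons.mp hL).2
    obtain ⟨hq, hqn⟩ := hjMatrix_col_bounds hL
    have hn : hjMatrix L 0 0 ≠ 0 := (hq.trans_lt hqn).ne'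
    rw [hj, ih hL, hjMatrix_cons_zero_zero, hjMatrix_cons_one_zero, one_div_div, sub_div,
      mul_div_cancel_right₀ b hn]

theorem hj_map_intCast {L : List ℤ} (hL : ∀ b ∈ L, 2 ≤ b) :
    hj (L.map (Int.cast : ℤ → ℚ)) = ((hjMatrix L 0 0 : ℤ) : ℚ) / (hjMatrix L 1 0 : ℤ) := by
  have hLQ : ∀ b ∈ L.map (Int.castRingHom ℚ), 2 ≤ b :=
    List.forall_mem_map.mpr fun b hb => show (2 : ℚ) ≤ b from mod_cast hL b hb
  have hvalue := hj_eq_hjMatrix_div hLQ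
  rwa [hjMatrix_map] at hvalue

theorem exists_hjMatrix_eq {L : List ℤ} (hL : ∀ b ∈ L, 2 ≤ b) :
    ∃ (n q q' : ℕ) (d : ℤ), hjMatrix L = !![(n : ℤ), -q'; q, d] ∧
      q < n ∧ q' < n ∧ (n : ℤ) * d + q * q' = 1 := by
  obtain ⟨hq, hqn⟩ := hjMatrix_col_bounds hL
  obtain ⟨hq', hqn'⟩ := hjMatrix_row_bounds hL
  obtain ⟨n, hn⟩ := Int.eq_ofNat_of_zero_le (hq.trans hqn.le)
  obtain ⟨q, hq⟩ := Int.eq_ofNat_of_zero_le hq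
  obtain ⟨q', hq'⟩ := Int.eq_ofNat_of_zero_le (neg_nonneg.mpr hq')
  have hdet := det_hjMatrix L
  rw [Matrix.det_fin_two] at hdet
  refine ⟨n, q, q', hjMatrix L 1 1, ?_, by omega, by omega, ?_⟩
  · rw [← hn, ← hq, ← hq', neg_neg]
    exact Matrix.eta_fin_two _
  · rw [← hn, ← hq, ← hq']
    linear_combination hdet

theorem exists_isTFraction_div_eq_iff {n q : ℕ} (hnq : n.Coprime q) :
    (∃ m r : ℕ, IsTFraction m r ∧ (n : ℚ) / q = m / r) ↔ IsTFraction n q := by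
  refine ⟨?_, fun h => ⟨n, q, h, rfl⟩⟩
  rintro ⟨m, r, hmr, heq⟩
  have ⟨hr, hrm, hcop, _⟩ := hmr
  have hq : 0 < q := by
    refine Nat.pos_of_ne_zero fun hq => ?_
    have : (0 : ℚ) < m / r := div_pos (mod_cast hr.trans hrm.le) (mod_cast hr)
    simp [← heq, hq] at this
  obtain ⟨hnm, hqr⟩ := Rat.div_int_inj (a := n) (b := q) (c := m) (d := r)
    (mod_cast hq) (mod_cast hr) hnq hcop (by simpa only [Int.cast_natCast] using heq)
  rwa [Int.ofNat_inj.mp hnm, Int.ofNat_inj.mp hqr]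

theorem isTFraction_iff_add_add_two_eq {n q q' : ℕ} (hq : q < n) (hq' : q' < n)
    (hinv : q * q' ≡ 1 [MOD n]) : IsTFraction n q ↔ q + q' + 2 = n := by
  have hcop : n.Coprime q := (Nat.coprime_of_mul_modEq_one q' hinv).symm
  have hdvd : n ∣ (q + 1) ^ 2 ↔ n ∣ q + q' + 2 := by
    have hmod : q * (q + q' + 2) ≡ (q + 1) ^ 2 [MOD n] :=
      calc q * (q + q' + 2) = q * q' + (q ^ 2 + 2 * q) := by ring
        _ ≡ 1 + (q ^ 2 + 2 * q) [MOD n] := hinv.add_right _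
        _ = (q + 1) ^ 2 := by ring
    rw [← hmod.dvd_iff dvd_rfl, hcop.dvd_mul_left]
  constructor
  · rintro ⟨-, -, -, hsq, hne⟩
    have hlt : q + q' + 2 < 2 * n := by omega
    exact Nat.eq_of_dvd_of_lt_two_mul (by omega) (hdvd.mp hsq) hlt
  · intro hsum
    have hq0 : q ≠ 0 := by
      rintro rfl
      have := Nat.coprime_zero_right n |>.mp hcop
      omega
    exact ⟨by omega, hq, hcop, hdvd.mpr hsum.symm.dvd, by omega⟩

-- In `IsTChain`, Lean elaborates the cast of the entries to `ℚ` as a monadic lift of `L`.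
theorem isTChain_iff_map_intCast (L : List ℤ) :
    IsTChain L ↔ (∀ b ∈ L, 2 ≤ b) ∧
      ∃ n q : ℕ, IsTFraction n q ∧ hj (L.map (Int.cast : ℤ → ℚ)) = (n : ℚ) / (q : ℚ) := by
  simp only [IsTChain, bind_pure_comp, List.map_eq_map, List.map_id_fun', id_eq]

theorem isTChain_iff_trace_eq_two (L : List ℤ) :
    IsTChain L ↔ (∀ b ∈ L, 2 ≤ b) ∧ (hjMatrix (L ++ [1])).trace = 2 := by
  rw [isTChain_iff_map_intCast]
  refine and_congr_right fun hL => ?_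
  obtain ⟨n, q, q', d, hM, hq, hq', hdet⟩ := exists_hjMatrix_eq hL
  have hcop : n.Coprime q := Nat.isCoprime_iff_coprime.mp ⟨d, q', by linear_combination hdet⟩
  have hinv : q * q' ≡ 1 [MOD n] := by
    rw [← Int.natCast_modEq_iff, Int.modEq_iff_dvd]
    exact ⟨d, by push_cast; linear_combination -hdet⟩
  have hvalue : hj (L.map (Int.cast : ℤ → ℚ)) = (n : ℚ) / q := by
    simp [hj_map_intCast hL, hM]
  have htrace : (hjMatrix (L ++ [1])).trace = (n : ℤ) - q' - q := by
    rw [hjMatrix_append, hjMatrix_singleton, hM, Matrix.mul_fin_two, Matrix.trace_fin_two_of]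
    ring
  rw [hvalue, exists_isTFraction_div_eq_iff hcop, isTFraction_iff_add_add_two_eq hq hq' hinv,
    htrace]
  omega

theorem not_isTChain_nil : ¬IsTChain [] := by
  simp [isTChain_iff_trace_eq_two, hjMatrix_singleton, Matrix.trace_fin_two]

theorem IsTChain.two_cons {L : List ℤ} {x : ℤ} (h : IsTChain (L ++ [x])) :
    IsTChain (2 :: (L ++ [x + 1])) := by
  rw [isTChain_iff_trace_eq_two] at h ⊢
  obtain ⟨hge, htrace⟩ := h
  refine ⟨?_, (trace_hjMatrix_two_cons L x).trans htrace⟩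
  simp only [List.forall_mem_append, List.forall_mem_cons] at hge ⊢
  grind

theorem IsTChain.append_two {x : ℤ} {L : List ℤ} (h : IsTChain (x :: L)) :
    IsTChain ((x + 1) :: (L ++ [2])) := by
  rw [isTChain_iff_trace_eq_two] at h ⊢
  obtain ⟨hge, htrace⟩ := h
  refine ⟨?_, (trace_hjMatrix_append_two x L).trans htrace⟩
  simp only [List.forall_mem_append, List.forall_mem_cons] at hge ⊢
  grind

/-- If `[b_1,…,b_ρ]` is a T-chain, then so are `[2, b_1,…,b_{ρ−1}, b_ρ + 1]` and
`[b_1 + 1, b_2,…,b_ρ, 2]`. -/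
theorem tchain_steps (L : List ℤ) (h : IsTChain L) :
    IsTChain (2 :: (L.dropLast ++ [L.getLast! + 1])) ∧
    IsTChain ((L.head! + 1) :: (L.tail ++ [2])) := by
  constructor
  · rcases L.eq_nil_or_concat' with rfl | ⟨M, x, rfl⟩
    · exact absurd h not_isTChain_nil
    · simpa [List.getLast!_eq_getLast?_getD] using h.two_cons
  · cases L with
    | nil => exact absurd h not_isTChain_nil
    | cons x M => exact h.append_two
end

section
/- For any number k ≥ 0 of intermediate 2's, the weighted fork [2 ∣ 2 ∣ 2 ∣ 2,…,2,1] — a central vertex of weight 2 joined to two single vertices of weight 2 and to the first vertex of a chain [2,…,2,1] with k vertices of weight 2 followed by one vertex of weight 1 — is parabolic. -/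
/-- A weighted graph (given by its matrix `M`) is parabolic if `M` is negative
semidefinite of rank `ρ − 1`. -/
def IsParabolic {m : ℕ} (M : Matrix (Fin m) (Fin m) ℝ) : Prop :=
  (-M).PosSemidef ∧ M.rank = m - 1

/-- The matrix of the fork `[2 ∣ 2 ∣ 2 ∣ 2,…,2,1]` with `k` intermediate `2`'s:
vertices `0` and `1` are the two single vertices of weight `2`, vertex `2` is the
central vertex of weight `2`, vertices `3,…,k+2` form the chain of `k` vertices of
weight `2`, and vertex `k+3` has weight `1`; the edges are `{0,2}`, `{1,2}` and the
path `2 — 3 — ⋯ — (k+3)`. -/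
def forkMatrix (k : ℕ) : Matrix (Fin (k + 4)) (Fin (k + 4)) ℝ :=
  fun i j =>
    if i = j then (if (i : ℕ) = k + 3 then -1 else -2)
    else if ((i : ℕ) = 0 ∧ (j : ℕ) = 2) ∨ ((j : ℕ) = 0 ∧ (i : ℕ) = 2) ∨
            ((i : ℕ) = 1 ∧ (j : ℕ) = 2) ∨ ((j : ℕ) = 1 ∧ (i : ℕ) = 2) ∨
            (2 ≤ (i : ℕ) ∧ (i : ℕ) + 1 = (j : ℕ)) ∨
            (2 ≤ (j : ℕ) ∧ (j : ℕ) + 1 = (i : ℕ))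
    then 1 else 0

/-!
The lattice `ℤⁿ` contains the vectors `e₀ + e₁, e₁ - e₀, e₂ - e₁, …, eₙ₋₁ - eₙ₋₂` (simple roots of
type `Dₙ`) and `-eₙ₋₁`. Their Gram matrix, with `n = k + 3`, is minus the matrix of the fork, which
is therefore negative semidefinite. These `n + 1` vectors span `ℝⁿ`, as the last one is `-eₙ₋₁` and
`eᵢ₋₁ = eᵢ - (eᵢ - eᵢ₋₁)` gives the other basis vectors in turn, so the rank is `n`.
-/

open scoped Matrix

theorem isParabolic_neg_mul_transpose_self_iff {m : ℕ} {ι : Type*} [Fintype ι]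
    (A : Matrix (Fin m) ι ℝ) : IsParabolic (-(A * Aᵀ)) ↔ A.rank = m - 1 := by
  have hpos : (A * Aᵀ).PosSemidef := by
    simpa only [Matrix.conjTranspose_eq_transpose_of_trivial] using
      Matrix.posSemidef_self_mul_conjTranspose A
  have hrank : (-(A * Aᵀ)).rank = A.rank := by
    rw [← neg_one_smul ℝ, Matrix.rank_smul_of_mem_nonZeroDivisors _ (by simp),
      Matrix.rank_self_mul_transpose]
  rw [IsParabolic, neg_neg, hrank]
  exact and_iff_right hpos

section StdVec

variable (R : Type*) (n : ℕ)

/-- The standard basis vector `eᵢ` of `Rⁿ` for `i < n`, extended by `eᵢ = 0` to all natural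
numbers `i`, so that the last vector of the fork needs no special case. -/
def stdVec [Zero R] [One R] (i : ℕ) : Fin n → R :=
  fun r => if (r : ℕ) = i then 1 else 0

variable {n}

theorem stdVec_eq_zero [Zero R] [One R] {i : ℕ} (hi : n ≤ i) : stdVec R n i = 0 := by
  ext r
  simp [stdVec, (r.isLt.trans_le hi).ne]

theorem stdVec_coe [Zero R] [One R] (i : Fin n) : stdVec R n i = Pi.single i 1 := by
  ext r
  simp [stdVec, Pi.single_apply, Fin.ext_iff]

theorem stdVec_dotProduct_stdVec [NonAssocSemiring R] (i j : ℕ) :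
    stdVec R n i ⬝ᵥ stdVec R n j = if i = j ∧ i < n then 1 else 0 := by
  by_cases hi : i < n
  · lift i to Fin n using hi
    simp [stdVec_coe, stdVec]
  · simp [stdVec_eq_zero R (not_lt.mp hi), hi]

end StdVec

section ForkVector

variable (R : Type*) [Ring R] (n : ℕ)

/-- The vectors `e₀ + e₁, e₁ - e₀, …, eₙ₋₁ - eₙ₋₂, -eₙ₋₁` of `Rⁿ`, indexed by `0, …, n` as the
vertices of the fork are when `n = k + 3`; the last one is `eₙ - eₙ₋₁` because `eₙ = 0`. -/
def forkVector : ℕ → Fin n → R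
  | 0 => stdVec R n 0 + stdVec R n 1
  | i + 1 => stdVec R n (i + 1) - stdVec R n i

variable {n}

theorem forkVector_zero_dotProduct_self (hn : 2 ≤ n) :
    forkVector R n 0 ⬝ᵥ forkVector R n 0 = 2 := by
  have h₀ : 0 < n := by omega
  have h₁ : 1 < n := by omega
  simp [forkVector, stdVec_dotProduct_stdVec, h₀, h₁, one_add_one_eq_two]

theorem forkVector_zero_dotProduct_succ (hn : 2 ≤ n) (j : ℕ) :
    forkVector R n 0 ⬝ᵥ forkVector R n (j + 1) = if j = 1 then -1 else 0 := by
  simp only [forkVector, add_dotProduct, dotProduct_sub, stdVec_dotProduct_stdVec]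
  grind

theorem forkVector_succ_dotProduct_succ {i j : ℕ} (hi : i < n) (hj : j < n) :
    forkVector R n (i + 1) ⬝ᵥ forkVector R n (j + 1) =
      if i = j then if i + 1 = n then 1 else 2
      else if i + 1 = j ∨ j + 1 = i then -1 else 0 := by
  simp only [forkVector, sub_dotProduct, dotProduct_sub, stdVec_dotProduct_stdVec]
  split_ifs <;> first | omega | norm_num

theorem stdVec_mem_span_forkVector {i : ℕ} (hi : i ≤ n) :
    stdVec R n i ∈ Submodule.span R (Set.range fun j : Fin (n + 1) => forkVector R n j) := by
  induction hi using Nat.decreasingInduction with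
  | self => exact stdVec_eq_zero R le_rfl ▸ zero_mem _
  | of_succ i hi ih =>
    have hmem : forkVector R n (i + 1) ∈
        Submodule.span R (Set.range fun j : Fin (n + 1) => forkVector R n j) :=
      Submodule.subset_span ⟨⟨i + 1, by omega⟩, rfl⟩
    have hsub : stdVec R n i = stdVec R n (i + 1) - forkVector R n (i + 1) :=
      (sub_sub_cancel _ _).symm
    exact hsub ▸ sub_mem ih hmem

variable (n) in
theorem span_range_forkVector :
    Submodule.span R (Set.range fun i : Fin (n + 1) => forkVector R n i) = ⊤ := by
  rw [eq_top_iff, ← (Pi.basisFun R (Fin n)).span_eq, Submodule.span_le]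
  rintro _ ⟨i, rfl⟩
  rw [Pi.basisFun_apply, ← stdVec_coe]
  exact stdVec_mem_span_forkVector R i.isLt.le

end ForkVector

/-- The matrix with rows `forkVector R n 0, …, forkVector R n n`; with `n = k + 3` it is the Gram
factor of `-forkMatrix k`. -/
def forkVectorMatrix (R : Type*) [Ring R] (n : ℕ) : Matrix (Fin (n + 1)) (Fin n) R :=
  Matrix.of fun i => forkVector R n i

theorem rank_forkVectorMatrix (K : Type*) [Field K] (n : ℕ) :
    (forkVectorMatrix K n).rank = n := by
  rw [Matrix.rank_eq_finrank_span_row]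
  have hspan : Submodule.span K (Set.range (forkVectorMatrix K n).row) = ⊤ :=
    span_range_forkVector K n
  rw [hspan, finrank_top, Module.finrank_fin_fun]

theorem forkMatrix_eq_neg_mul_transpose_self (k : ℕ) :
    forkMatrix k = -(forkVectorMatrix ℝ (k + 3) * (forkVectorMatrix ℝ (k + 3))ᵀ) := by
  ext i j
  change _ = -(forkVector ℝ (k + 3) i ⬝ᵥ forkVector ℝ (k + 3) j)
  rcases i with ⟨_ | i, hi⟩ <;> rcases j with ⟨_ | j, hj⟩
  · simp [forkMatrix, forkVector_zero_dotProduct_self]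
  · rw [forkVector_zero_dotProduct_succ ℝ (by omega)]
    grind [forkMatrix]
  · rw [dotProduct_comm, forkVector_zero_dotProduct_succ ℝ (by omega)]
    grind [forkMatrix]
  · rw [forkVector_succ_dotProduct_succ ℝ (by omega) (by omega)]
    grind [forkMatrix]

/-- For every `k ≥ 0`, the fork `[2 ∣ 2 ∣ 2 ∣ 2,…,2,1]` (with `k` intermediate `2`'s)
is parabolic. -/
theorem fork_parabolic (k : ℕ) : IsParabolic (forkMatrix k) := by
  rw [forkMatrix_eq_neg_mul_transpose_self, isParabolic_neg_mul_transpose_self_iff]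
  exact rank_forkVectorMatrix ℝ (k + 3)
end
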